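/- arXiv:1205.6578 — 2 statements merged into one kernel-verified Lean document; each statement's English description precedes it below -/
import Mathlib

section
/- For every permutation σ of {1,…,n}, the art statistic of DTR(zigzag_n, σ) equals the mad statistic of σ: art(DTR(zigzag_n, σ)) = mad(σ). -/
open Finset

noncomputable section

/-- A Dyck path of order `n`: a word of `2n` steps (`true` = up-step `(+1,+1)`,
`false` = down-step `(+1,-1)`) from `(-n,0)` to `(n,0)` staying weakly above the x-axis. -/
structure DyckPath (n : ℕ) where
  step : Fin (2 * n) → Bool
  balanced : (Finset.univ.filter fun i => step i = true).card = n
  nonneg : ∀ k : ℕ, k ≤ 2 * n →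
    (Finset.univ.filter fun i : Fin (2 * n) => (i : ℕ) < k ∧ step i = false).card ≤
      (Finset.univ.filter fun i : Fin (2 * n) => (i : ℕ) < k ∧ step i = true).card

namespace DyckPath

/-- Height of the path above column `x` (columns run from `-n` to `n`). -/
def ht {n : ℕ} (P : DyckPath n) (x : ℤ) : ℤ :=
  ((Finset.univ.filter fun i : Fin (2 * n) => ((i : ℕ) : ℤ) < x + n ∧ P.step i = true).card : ℤ) -
    ((Finset.univ.filter fun i : Fin (2 * n) => ((i : ℕ) : ℤ) < x + n ∧ P.step i = false).card : ℤ)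

/-- Height of the path at lattice point number `k`, `0 ≤ k ≤ 2n`
(point `k` lies at column `k - n`). -/
def pt {n : ℕ} (P : DyckPath n) (k : ℕ) : ℤ := P.ht ((k : ℤ) - n)

end DyckPath

/-- `IsChord P p q`: the up-step at (0-indexed) position `p` matches the down-step at
position `q`, forming a chord of `P`. -/
def IsChord {n : ℕ} (P : DyckPath n) (p q : ℕ) : Prop :=
  p < q ∧ q < 2 * n ∧
    (∃ hp : p < 2 * n, P.step ⟨p, hp⟩ = true) ∧
    (∃ hq : q < 2 * n, P.step ⟨q, hq⟩ = false) ∧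
    P.pt (q + 1) = P.pt p ∧
    ∀ m : ℕ, p < m → m ≤ q → P.pt p < P.pt m

/-- A natural labeling of the chord poset of `P`: the chord labeled `i` has its up-step at
(0-indexed) position `l i` and matching down-step at position `r i`; distinct labels name
distinct chords; and if one chord is nested inside another it receives a larger label. -/
structure ChordLabeling {n : ℕ} (P : DyckPath n) where
  l : Fin n → ℕ
  r : Fin n → ℕ
  chord : ∀ i, IsChord P (l i) (r i)
  inj : Function.Injective l
  natural : ∀ i j : Fin n, l j < l i → r i < r j → j < i

/-- The length of the chord labeled `i`: the number of up steps of `P` between and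
including its two endpoints. -/
def chordLen {n : ℕ} {P : DyckPath n} (C : ChordLabeling P) (i : Fin n) : ℕ :=
  (Finset.univ.filter fun m : Fin (2 * n) =>
    C.l i ≤ (m : ℕ) ∧ (m : ℕ) ≤ C.r i ∧ P.step m = true).card

/-- The growth sequence `p_1, …, p_n` associated with a natural chord labeling:
`p i = #{j<i : l j < l i} + #{j<i : r j < l i}`. -/
def seqOf {n : ℕ} {P : DyckPath n} (C : ChordLabeling P) (i : Fin n) : ℕ :=
  (Finset.univ.filter fun j : Fin n => j < i ∧ C.l j < C.l i).card +
    (Finset.univ.filter fun j : Fin n => j < i ∧ C.r j < C.l i).card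

/-- `σ` is the standardization of the word `w` (with distinct letters). -/
def IsStandardization {n : ℕ} (w : Fin n → ℕ) (σ : Equiv.Perm (Fin n)) : Prop :=
  ∀ i j : Fin n, σ i < σ j ↔ w i < w j

/-- `σ ∈ 𝓛(P_λ)`: σ is `L₀ ∘ L⁻¹` for some natural labeling `L` of the chord poset,
equivalently the standardization of the word of left endpoints of a natural labeling. -/
def LinExt {n : ℕ} (P : DyckPath n) (σ : Equiv.Perm (Fin n)) : Prop :=
  ∃ C : ChordLabeling P, IsStandardization C.l σ

/-- Successor index in `Fin n` (used only under the guard `i+1 < n`). -/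
def nextIdx {n : ℕ} (i : Fin n) : Fin n := ⟨((i : ℕ) + 1) % n, Nat.mod_lt _ i.pos⟩

/-- Descent set of a word: positions `i` with `i+1 < n` and `w i > w (i+1)`. -/
def descentFinset {n : ℕ} (w : Fin n → ℕ) : Finset (Fin n) :=
  Finset.univ.filter fun i => (i : ℕ) + 1 < n ∧ w (nextIdx i) < w i

/-- Number of inversions of a word. -/
def wordInv {n : ℕ} (w : Fin n → ℕ) : ℕ :=
  (Finset.univ.filter fun p : Fin n × Fin n => p.1 < p.2 ∧ w p.2 < w p.1).card

/-- The word of values of a permutation. -/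
def permWord {n : ℕ} (σ : Equiv.Perm (Fin n)) : Fin n → ℕ := fun i => (σ i : ℕ)

/-- inv(σ). -/
def permInv {n : ℕ} (σ : Equiv.Perm (Fin n)) : ℕ := wordInv (permWord σ)

/-- des(σ). -/
def permDes {n : ℕ} (σ : Equiv.Perm (Fin n)) : ℕ := (descentFinset (permWord σ)).card

/-- `REM_i(w) = {k > i : w i > w k > w (i+1)}`, the right embraced numbers. -/
def remSet {n : ℕ} (w : Fin n → ℕ) (i : Fin n) : Finset (Fin n) :=
  Finset.univ.filter fun k => i < k ∧ w (nextIdx i) < w k ∧ w k < w i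

/-- desdif(σ) = Σ_{i ∈ DES σ} (σ i − σ (i+1)). -/
def desdif {n : ℕ} (σ : Equiv.Perm (Fin n)) : ℕ :=
  ∑ i ∈ descentFinset (permWord σ), (permWord σ i - permWord σ (nextIdx i))

/-- res(σ) = Σ_{i ∈ DES σ} #{k < i : σ i > σ k > σ (i+1)}. -/
def resStat {n : ℕ} (σ : Equiv.Perm (Fin n)) : ℕ :=
  ∑ i ∈ descentFinset (permWord σ),
    (Finset.univ.filter fun k : Fin n =>
      k < i ∧ permWord σ (nextIdx i) < permWord σ k ∧ permWord σ k < permWord σ i).card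

/-- The Mahonian statistic mad(σ) = desdif(σ) + res(σ). -/
def mad {n : ℕ} (σ : Equiv.Perm (Fin n)) : ℕ := desdif σ + resStat σ

/-- σ avoids the pattern 231. -/
def Avoids231 {n : ℕ} (σ : Equiv.Perm (Fin n)) : Prop :=
  ¬∃ i j k : Fin n, i < j ∧ j < k ∧ σ k < σ i ∧ σ i < σ j

/-- The boxes of the skew shape `lam/mu` (with `mu` weakly above `lam`), each box
recorded by its bottom corner (a lattice point `(x, z)` with `z ≡ x + n (mod 2)`). -/
def skewCells {n : ℕ} (lam mu : DyckPath n) : Finset (ℤ × ℤ) :=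
  ((Finset.Icc (-(n : ℤ)) n) ×ˢ (Finset.Icc (0 : ℤ) n)).filter fun c =>
    lam.ht c.1 ≤ c.2 ∧ c.2 + 2 ≤ mu.ht c.1 ∧ (c.2 - c.1 - n) % 2 = 0

/-- A Dyck tile, recorded by the set of bottom corners of its boxes: these form
a Dyck-path shape, i.e. a ±1-step lattice path whose two ends are lowest. -/
def IsDyckTile (t : Finset (ℤ × ℤ)) : Prop :=
  ∃ (a b : ℤ) (f : ℤ → ℤ), a ≤ b ∧
    (∀ x : ℤ, a ≤ x → x < b → f (x + 1) = f x + 1 ∨ f (x + 1) = f x - 1) ∧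
    f b = f a ∧ (∀ x : ℤ, a ≤ x → x ≤ b → f a ≤ f x) ∧
    t = (Finset.Icc a b).image fun x => (x, f x)

/-- A Dyck tiling of order `n`: a tiling of the skew shape between two Dyck paths of
order `n` by Dyck tiles. -/
structure DyckTiling (n : ℕ) where
  lower : DyckPath n
  upper : DyckPath n
  below : ∀ x : ℤ, lower.ht x ≤ upper.ht x
  tiles : Finset (Finset (ℤ × ℤ))
  isDyck : ∀ t ∈ tiles, IsDyckTile t
  disj : ∀ t ∈ tiles, ∀ u ∈ tiles, t ≠ u → Disjoint t u
  cover : tiles.biUnion id = skewCells lower upper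

namespace DyckTiling

/-- Number of boxes of the skew shape. -/
def area {n : ℕ} (T : DyckTiling n) : ℕ := (skewCells T.lower T.upper).card

/-- Number of tiles. -/
def numTiles {n : ℕ} (T : DyckTiling n) : ℕ := T.tiles.card

/-- art(T) = (area(T) + tiles(T)) / 2. -/
def art {n : ℕ} (T : DyckTiling n) : ℕ := (T.area + T.numTiles) / 2

/-- dis(T): the number of step positions where the lower path steps down while the
upper path steps up. -/
def dis {n : ℕ} (T : DyckTiling n) : ℕ :=
  (Finset.univ.filter fun i : Fin (2 * n) =>
    T.lower.step i = false ∧ T.upper.step i = true).card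

/-- Cover-inclusiveness: whenever a tile has a box strictly above a box of another tile,
its horizontal extent is contained in that of the other tile. -/
def CoverInclusive {n : ℕ} (T : DyckTiling n) : Prop :=
  ∀ t ∈ T.tiles, ∀ u ∈ T.tiles,
    (∃ p ∈ t, ∃ q ∈ u, (p : ℤ × ℤ).1 = (q : ℤ × ℤ).1 ∧ (q : ℤ × ℤ).2 < (p : ℤ × ℤ).2) →
    ∀ p ∈ t, ∃ y : ℤ, ((p : ℤ × ℤ).1, y) ∈ u

end DyckTiling

/-- Height function of the spread at column `s` of a Dyck path. -/
def spreadHt {n : ℕ} (P : DyckPath n) (s x : ℤ) : ℤ :=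
  if x < s then P.ht (x + 1) else if x = s then P.ht s + 1 else P.ht (x - 1)

/-- Spread of a tile at column `s`: points left of `s` move left, points right of `s`
move right, and a point at column `s` is duplicated upward. -/
def spreadTile (s : ℤ) (t : Finset (ℤ × ℤ)) : Finset (ℤ × ℤ) :=
  ((t.filter fun p => p.1 ≤ s).image fun p => (p.1 - 1, p.2)) ∪
    ((t.filter fun p => p.1 = s).image fun p => (p.1, p.2 + 1)) ∪
    ((t.filter fun p => s ≤ p.1).image fun p => (p.1 + 1, p.2))

/-- Spread of a set of tiles at column `s`. -/
def spreadTiles (s : ℤ) (ts : Finset (Finset (ℤ × ℤ))) : Finset (Finset (ℤ × ℤ)) :=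
  ts.image (spreadTile s)

/-- Column `c` is eligible for a tiling with upper-boundary height function `h` and
tile set `ts`: the upper boundary has an up step ending at column `c`, and its point at
column `c` is not the top corner of a one-box tile. -/
def EligibleCol (h : ℤ → ℤ) (ts : Finset (Finset (ℤ × ℤ))) (c : ℤ) : Prop :=
  h c = h (c - 1) + 1 ∧ ({(c, h c - 2)} : Finset (ℤ × ℤ)) ∉ ts

/-- `T'` is the result of the strip-grow map applied to `(T, s)`: spread `T` at `s` and
add a one-box tile on each up step of the (spread) upper boundary starting at a column
`≥ s` (i.e. strictly to the right of column `s`). -/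
def StripGrowRel {n : ℕ} (T : DyckTiling n) (s : ℤ) (T' : DyckTiling (n + 1)) : Prop :=
  (∀ x : ℤ, T'.lower.ht x = spreadHt T.lower s x) ∧
  (∀ x : ℤ, T'.upper.ht x =
    if s ≤ x ∧ spreadHt T.upper s (x + 1) = spreadHt T.upper s x + 1 then
      spreadHt T.upper s x + 2
    else spreadHt T.upper s x) ∧
  T'.tiles = spreadTiles s T.tiles ∪
    ((Finset.Icc s (n : ℤ)).filter fun x =>
        spreadHt T.upper s (x + 1) = spreadHt T.upper s x + 1).image
      (fun x => ({(x, spreadHt T.upper s x)} : Finset (ℤ × ℤ)))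

/-- `T'` is the result of the ribbon-grow map applied to `(T, s)`: spread `T` at `s`,
and if the special column `Q` of the spread tiling is strictly right of `s`, add a
ribbon of one-box tiles at all columns strictly between `s` and `Q`. -/
def RibbonGrowRel {n : ℕ} (T : DyckTiling n) (s : ℤ) (T' : DyckTiling (n + 1)) : Prop :=
  (∀ x : ℤ, T'.lower.ht x = spreadHt T.lower s x) ∧
  ∃ Q : ℤ,
    EligibleCol (spreadHt T.upper s) (spreadTiles s T.tiles) Q ∧
    (∀ c : ℤ, EligibleCol (spreadHt T.upper s) (spreadTiles s T.tiles) c → c ≤ Q) ∧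
    (∀ x : ℤ, T'.upper.ht x =
      if s < x ∧ x < Q then spreadHt T.upper s x + 2 else spreadHt T.upper s x) ∧
    T'.tiles = spreadTiles s T.tiles ∪
      (Finset.Ioo s Q).image (fun x => ({(x, spreadHt T.upper s x)} : Finset (ℤ × ℤ)))

/-- `s` is the special column of `T`: its rightmost eligible column. -/
def SpecialCol {n : ℕ} (T : DyckTiling n) (s : ℤ) : Prop :=
  EligibleCol T.upper.ht T.tiles s ∧ ∀ c : ℤ, EligibleCol T.upper.ht T.tiles c → c ≤ s

/-- In the strip-shrink map applied to `T'` with special column `s`, a one-box tile is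
removed at column `x`: `x` is right of `s` and there is a one-box tile there that is
part of an up step of the upper boundary. -/
def StripRemovedAt {n : ℕ} (T' : DyckTiling n) (s x : ℤ) : Prop :=
  s < x ∧ T'.upper.ht x = T'.upper.ht (x - 1) + 1 ∧
    ({(x, T'.upper.ht x - 2)} : Finset (ℤ × ℤ)) ∈ T'.tiles

instance {n : ℕ} (T' : DyckTiling n) (s x : ℤ) : Decidable (StripRemovedAt T' s x) := by
  unfold StripRemovedAt; infer_instance

/-- `(T, s)` is the result of the strip-shrink map applied to `T'`: `s` is the special
column of `T'`; all one-box tiles right of `s` lying on up steps of the upper boundary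
are removed; and the result is the spread of `T` at `s`. -/
def StripShrinkRel {n : ℕ} (T' : DyckTiling (n + 1)) (T : DyckTiling n) (s : ℤ) : Prop :=
  SpecialCol T' s ∧
  (∀ x : ℤ, spreadHt T.lower s x = T'.lower.ht x) ∧
  (∀ x : ℤ, spreadHt T.upper s x =
    if StripRemovedAt T' s x then T'.upper.ht x - 2 else T'.upper.ht x) ∧
  spreadTiles s T.tiles =
    T'.tiles \ (((Finset.Ioc s ((n : ℤ) + 1)).filter fun x => StripRemovedAt T' s x).image
      fun x => ({(x, T'.upper.ht x - 2)} : Finset (ℤ × ℤ)))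

/-- `(T, s)` is the result of the ribbon-shrink map applied to `T'`: `s` is the special
column of `T'`; the maximal run of topmost one-box tiles in columns `s+1, s+2, …` is
removed; and the result is the spread of `T` at `s`. -/
def RibbonShrinkRel {n : ℕ} (T' : DyckTiling (n + 1)) (T : DyckTiling n) (s : ℤ) : Prop :=
  SpecialCol T' s ∧
  ∃ r : ℤ, s < r ∧
    (∀ x : ℤ, s < x → x < r → ({(x, T'.upper.ht x - 2)} : Finset (ℤ × ℤ)) ∈ T'.tiles) ∧
    ({(r, T'.upper.ht r - 2)} : Finset (ℤ × ℤ)) ∉ T'.tiles ∧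
    (∀ x : ℤ, spreadHt T.lower s x = T'.lower.ht x) ∧
    (∀ x : ℤ, spreadHt T.upper s x =
      if s < x ∧ x < r then T'.upper.ht x - 2 else T'.upper.ht x) ∧
    spreadTiles s T.tiles =
      T'.tiles \ ((Finset.Ioo s r).image fun x => ({(x, T'.upper.ht x - 2)} : Finset (ℤ × ℤ)))

/-- `IsDTS n p T`: `T` is the Dyck tiling `DTS(p_1, …, p_n)` (indices 0-based, so the
growth column for step `i` is `p i - i`). -/
inductive IsDTS : (n : ℕ) → (Fin n → ℕ) → DyckTiling n → Prop where
  | nil (p : Fin 0 → ℕ) (T : DyckTiling 0) : IsDTS 0 p T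
  | cons (n : ℕ) (p : Fin (n + 1) → ℕ) (T : DyckTiling n) (T' : DyckTiling (n + 1)) :
      IsDTS n (fun i => p i.castSucc) T →
      StripGrowRel T ((p (Fin.last n) : ℤ) - n) T' → IsDTS (n + 1) p T'

/-- `IsDTR n p T`: `T` is the Dyck tiling `DTR(p_1, …, p_n)`. -/
inductive IsDTR : (n : ℕ) → (Fin n → ℕ) → DyckTiling n → Prop where
  | nil (p : Fin 0 → ℕ) (T : DyckTiling 0) : IsDTR 0 p T
  | cons (n : ℕ) (p : Fin (n + 1) → ℕ) (T : DyckTiling n) (T' : DyckTiling (n + 1)) :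
      IsDTR n (fun i => p i.castSucc) T →
      RibbonGrowRel T ((p (Fin.last n) : ℤ) - n) T' → IsDTR (n + 1) p T'

/-- `T = DTS(λ, σ)`. -/
def IsDTSof {n : ℕ} (lam : DyckPath n) (σ : Equiv.Perm (Fin n)) (T : DyckTiling n) : Prop :=
  ∃ C : ChordLabeling lam, IsStandardization C.l σ ∧ IsDTS n (seqOf C) T

/-- `T = DTR(λ, σ)`. -/
def IsDTRof {n : ℕ} (lam : DyckPath n) (σ : Equiv.Perm (Fin n)) (T : DyckTiling n) : Prop :=
  ∃ C : ChordLabeling lam, IsStandardization C.l σ ∧ IsDTR n (seqOf C) T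

/-- Increment `a` if it exceeds `p`. -/
def bump (p a : ℕ) : ℕ := if p < a then a + 1 else a

/-- The perfect matching `match(p_1, …, p_n)` of `{1, …, 2n}`. -/
def matchSeq : (n : ℕ) → (Fin n → ℕ) → Finset (ℕ × ℕ)
  | 0, _ => ∅
  | n + 1, p =>
    ((matchSeq n fun i => p i.castSucc).image fun q =>
      (bump (p (Fin.last n)) q.1, bump (p (Fin.last n)) q.2)) ∪
      {(p (Fin.last n) + 1, 2 * (n + 1))}

/-- The number of nestings of a matching: pairs `(a,b)`, `(c,d)` with `c < a < b < d`. -/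
def nestings (M : Finset (ℕ × ℕ)) : ℕ :=
  ((M ×ˢ M).filter fun q => q.2.1 < q.1.1 ∧ q.1.1 < q.1.2 ∧ q.1.2 < q.2.2).card

/-- `w` is the min-word of `M`: the list of the smaller elements of the pairs of `M`,
sorted by the larger elements. -/
def IsMinWord (n : ℕ) (M : Finset (ℕ × ℕ)) (w : Fin n → ℕ) : Prop :=
  ∃ b : Fin n → ℕ, StrictMono b ∧ (∀ i, w i < b i) ∧
    M = Finset.univ.image fun i => (w i, b i)

/-- The number of tiles of `T` containing boxes over both endpoint columns of the
chord with endpoints at step positions `p < q`. -/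
def chordTileCount {n : ℕ} (T : DyckTiling n) (p q : ℕ) : ℕ :=
  (T.tiles.filter fun t =>
    (∃ c ∈ t, (c : ℤ × ℤ).1 = (p : ℤ) + 1 - n) ∧ (∃ c ∈ t, (c : ℤ × ℤ).1 = (q : ℤ) - n)).card

/-- A Dyck tableau of order `n` over the zigzag path `Z` of order `n+1`: a skew shape
`Z/μ` with `n` dots, one in each column of the skew shape through a valley of `Z`. -/
structure DyckTableau (n : ℕ) (Z : DyckPath (n + 1)) where
  upper : DyckPath (n + 1)
  below : ∀ x : ℤ, Z.ht x ≤ upper.ht x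
  dots : Finset (ℤ × ℤ)
  sub : dots ⊆ skewCells Z upper
  card_dots : dots.card = n
  valley : ∀ x : ℤ, Z.ht (x - 1) = Z.ht x + 1 → Z.ht (x + 1) = Z.ht x + 1 →
    (dots.filter fun c => c.1 = x).card = 1

/-- The `q`-integer `[m]_q = 1 + q + ⋯ + q^(m-1)` as a polynomial. -/
def qint (m : ℕ) : Polynomial ℤ := ∑ i ∈ Finset.range m, Polynomial.X ^ i

/-- The `q`-factorial `[n]_q!`. -/
def qfact (n : ℕ) : Polynomial ℤ := ∏ i ∈ Finset.range n, qint (i + 1)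


/-! ### The spread of a tiling -/

lemma DyckPath.ht_le {n : ℕ} (P : DyckPath n) (x : ℤ) : P.ht x ≤ n := by
  have h := P.balanced
  have h2 : (Finset.univ.filter fun i : Fin (2 * n) =>
      ((i : ℕ) : ℤ) < x + n ∧ P.step i = true).card ≤ n := by
    conv_rhs => rw [← h]
    exact Finset.card_le_card fun i hi => by simp_all
  unfold DyckPath.ht
  omega

lemma DyckPath.ht_order_zero (P : DyckPath 0) (x : ℤ) : P.ht x = 0 := by
  have h : IsEmpty (Fin (2 * 0)) := by simpa using Fin.isEmpty
  simp [DyckPath.ht, Finset.univ_eq_empty]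

lemma mem_spreadTile {s : ℤ} {t : Finset (ℤ × ℤ)} {x z : ℤ} :
    (x, z) ∈ spreadTile s t ↔
      (x < s ∧ (x + 1, z) ∈ t) ∨ (x = s ∧ (s, z - 1) ∈ t) ∨ (s < x ∧ (x - 1, z) ∈ t) := by
  simp only [spreadTile, Finset.mem_union, Finset.mem_image, Finset.mem_filter, Prod.exists,
    Prod.mk.injEq]
  constructor
  · rintro ((⟨a, b, ⟨h, h'⟩, rfl, rfl⟩ | ⟨a, b, ⟨h, h'⟩, rfl, rfl⟩) | ⟨a, b, ⟨h, h'⟩, rfl, rfl⟩)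
    · left; exact ⟨by omega, by simpa using h⟩
    · right; left; subst h'; exact ⟨rfl, by simpa using h⟩
    · right; right; exact ⟨by omega, by simpa using h⟩
  · rintro (⟨h, h'⟩ | ⟨rfl, h'⟩ | ⟨h, h'⟩)
    · left; left; exact ⟨_, _, ⟨h', by omega⟩, by omega, rfl⟩
    · left; right; exact ⟨_, _, ⟨h', rfl⟩, rfl, by omega⟩
    · right; exact ⟨_, _, ⟨h', by omega⟩, by omega, rfl⟩

lemma spreadTile_injective (s : ℤ) : Function.Injective (spreadTile s) := by
  intro t u h
  ext ⟨x, z⟩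
  rcases le_or_gt x s with hx | hx
  · have := Finset.ext_iff.1 h (x - 1, z)
    rw [mem_spreadTile, mem_spreadTile] at this
    simpa [show x - 1 < s by omega, show x - 1 ≠ s by omega, show ¬ s < x - 1 by omega] using this
  · have := Finset.ext_iff.1 h (x + 1, z)
    rw [mem_spreadTile, mem_spreadTile] at this
    simpa [show s < x + 1 by omega, show x + 1 ≠ s by omega, show ¬ x + 1 < s by omega] using this

lemma spreadTile_singleton {s x : ℤ} (z : ℤ) (h : s < x) :
    spreadTile s {(x, z)} = {(x + 1, z)} := by
  ext ⟨a, b⟩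
  simp only [mem_spreadTile, Finset.mem_singleton, Prod.mk.injEq]
  omega

lemma singleton_mem_spreadTiles {s x : ℤ} (z : ℤ) (h : s < x) (ts : Finset (Finset (ℤ × ℤ))) :
    {(x + 1, z)} ∈ spreadTiles s ts ↔ {(x, z)} ∈ ts := by
  rw [spreadTiles, ← spreadTile_singleton z h]
  exact (spreadTile_injective s).mem_finset_image

lemma singleton_notMem_spreadTiles (s z : ℤ) (ts : Finset (Finset (ℤ × ℤ))) :
    {(s, z)} ∉ spreadTiles s ts := by
  intro h
  obtain ⟨t, -, ht⟩ := Finset.mem_image.1 h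
  have h1 : (s, z) ∈ spreadTile s t := by simp [ht]
  rw [mem_spreadTile] at h1
  have h2 : (s, z - 1) ∈ t := by simpa using h1
  have h3 : (s - 1, z - 1) ∈ spreadTile s t := by
    rw [mem_spreadTile]
    left
    exact ⟨by omega, by simpa using h2⟩
  rw [ht] at h3
  simp at h3

lemma card_spreadTile (s : ℤ) (t : Finset (ℤ × ℤ)) :
    (spreadTile s t).card = t.card + 2 * (t.filter fun p => p.1 = s).card := by
  have hle : (t.filter fun p => p.1 ≤ s).card =
      (t.filter fun p => p.1 < s).card + (t.filter fun p => p.1 = s).card := by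
    rw [← Finset.card_union_of_disjoint]
    · congr 1
      ext p
      simp only [Finset.mem_filter, Finset.mem_union, le_iff_lt_or_eq]
      tauto
    · rw [Finset.disjoint_filter]
      intros
      omega
  have hlt : t.card = (t.filter fun p => p.1 < s).card + (t.filter fun p => s ≤ p.1).card := by
    rw [← Finset.card_filter_add_card_filter_not (s := t) (fun p => p.1 < s)]
    simp
  rw [spreadTile, Finset.card_union_of_disjoint, Finset.card_union_of_disjoint,
    Finset.card_image_of_injective, Finset.card_image_of_injective,
    Finset.card_image_of_injective]
  · omega
  · rintro ⟨a, b⟩ ⟨c, d⟩ h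
    simpa using h
  · rintro ⟨a, b⟩ ⟨c, d⟩ h
    simpa using h
  · rintro ⟨a, b⟩ ⟨c, d⟩ h
    simpa using h
  · rw [Finset.disjoint_left]
    rintro ⟨a, b⟩ h1 h2
    simp only [Finset.mem_image, Finset.mem_filter, Prod.exists, Prod.mk.injEq] at h1 h2
    obtain ⟨_, _, _, _, _⟩ := h1
    obtain ⟨_, _, _, _, _⟩ := h2
    omega
  · rw [Finset.disjoint_left]
    rintro ⟨a, b⟩ h1 h2
    simp only [Finset.mem_union, Finset.mem_image, Finset.mem_filter, Prod.exists,
      Prod.mk.injEq] at h1 h2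
    obtain ⟨_, _, _, _, _⟩ := h2
    rcases h1 with ⟨_, _, _, _, _⟩ | ⟨_, _, _, _, _⟩ <;> omega

namespace DyckTiling

variable {n : ℕ}

lemma sum_card_filter_tiles (T : DyckTiling n) (p : ℤ × ℤ → Prop) [DecidablePred p] :
    ∑ t ∈ T.tiles, (t.filter p).card = ((skewCells T.lower T.upper).filter p).card := by
  rw [← T.cover, Finset.filter_biUnion, Finset.card_biUnion]
  · rfl
  · intro t ht u hu h
    exact (T.disj t ht u hu h).mono (Finset.filter_subset _ _) (Finset.filter_subset _ _)

lemma area_eq_sum_card (T : DyckTiling n) : T.area = ∑ t ∈ T.tiles, t.card := by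
  simpa [area] using (T.sum_card_filter_tiles fun _ => True).symm

end DyckTiling

lemma card_skewCells_column {n : ℕ} (lam mu : DyckPath n) {s : ℤ} {d : ℕ}
    (hs : s ∈ Finset.Icc (-(n : ℤ)) n) (hpar : (s + n) % 2 = 0)
    (hlam : lam.ht s = 0) (hmu : mu.ht s = 2 * d) :
    ((skewCells lam mu).filter fun c => c.1 = s).card = d := by
  have h : ((skewCells lam mu).filter fun c => c.1 = s) =
      (Finset.range d).image fun k : ℕ => (s, 2 * (k : ℤ)) := by
    ext ⟨x, z⟩
    have hle := mu.ht_le s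
    simp only [skewCells, Finset.mem_filter, Finset.mem_product, Finset.mem_image,
      Finset.mem_range, Prod.mk.injEq]
    constructor
    · rintro ⟨⟨⟨h1, h2⟩, h3, h4, h5⟩, rfl⟩
      exact ⟨(z / 2).toNat, by omega, rfl, by omega⟩
    · rintro ⟨k, hk, rfl, rfl⟩
      refine ⟨⟨⟨hs, ?_⟩, ?_, ?_, ?_⟩, rfl⟩
      · rw [Finset.mem_Icc]; omega
      all_goals omega
  rw [h, Finset.card_image_of_injective, Finset.card_range]
  intro a b hab
  simpa using hab

/-! ### The ribbon-grow map -/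

lemma eligibleCol_spread_self {n : ℕ} (P : DyckPath n) (ts : Finset (Finset (ℤ × ℤ))) (s : ℤ) :
    EligibleCol (spreadHt P s) (spreadTiles s ts) s := by
  refine ⟨by simp [spreadHt], singleton_notMem_spreadTiles _ _ _⟩

lemma eligibleCol_spread_iff {n : ℕ} (P : DyckPath n) (ts : Finset (Finset (ℤ × ℤ))) {s c : ℤ}
    (hc : s ≤ c) :
    EligibleCol (spreadHt P s) (spreadTiles s ts) (c + 1) ↔ s < c ∧ EligibleCol P.ht ts c := by
  rcases hc.eq_or_lt with rfl | hc
  · simp [EligibleCol, spreadHt]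
    omega
  · have h1 : spreadHt P s (c + 1) = P.ht c := by
      simp [spreadHt, show ¬ c + 1 < s by omega, show c + 1 ≠ s by omega]
    have h2 : spreadHt P s c = P.ht (c - 1) := by
      simp [spreadHt, show ¬ c < s by omega, hc.ne']
    simp [EligibleCol, h1, h2, hc, singleton_mem_spreadTiles _ hc]

namespace RibbonGrowRel

variable {n : ℕ} {T : DyckTiling n} {T' : DyckTiling (n + 1)} {s : ℤ}

/-- A grown tiling has its special column at the growth column. -/
lemma specialCol (h : RibbonGrowRel T s T') : SpecialCol T' s := by
  obtain ⟨-, Q, hQ, hmax, hU, htiles⟩ := h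
  have hsQ : s ≤ Q := hmax s (eligibleCol_spread_self _ _ _)
  have hnot : ∀ x z : ℤ, x ∉ Finset.Ioo s Q →
      (({(x, z)} : Finset (ℤ × ℤ)) ∈ T'.tiles ↔ {(x, z)} ∈ spreadTiles s T.tiles) := by
    intro x z hx
    rw [htiles, Finset.mem_union, or_iff_left]
    rintro h
    obtain ⟨y, hy, hxy⟩ := Finset.mem_image.1 h
    simp only [Finset.singleton_inj, Prod.mk.injEq] at hxy
    exact hx (hxy.1 ▸ hy)
  constructor
  · have := eligibleCol_spread_self T.upper T.tiles s
    refine ⟨?_, ?_⟩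
    · rw [hU, hU, if_neg (by omega), if_neg (by omega)]
      exact this.1
    · rw [hnot _ _ (by simp)]
      exact singleton_notMem_spreadTiles _ _ _
  · intro c hc
    by_contra! hsc
    rcases lt_trichotomy c Q with hcQ | rfl | hcQ
    · apply hc.2
      rw [hU, if_pos ⟨hsc, hcQ⟩, htiles]
      refine Finset.mem_union_right _ (Finset.mem_image.2 ⟨c, by simp [hsc, hcQ], by simp⟩)
    · have h1 := hc.1
      rw [hU, hU, if_neg (by omega), hQ.1] at h1
      split_ifs at h1 with h2
      · omega
      · have h3 := (eligibleCol_spread_iff T.upper T.tiles (show s ≤ c - 1 by omega)).1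
          (by simpa using hQ)
        omega
    · refine absurd (hmax c ⟨?_, ?_⟩) (by omega)
      · have h1 := hc.1
        rwa [hU, hU, if_neg (by omega), if_neg (by omega)] at h1
      · have h1 := hc.2
        rwa [hnot _ _ (by simp; omega), hU, if_neg (by omega)] at h1

/-- The ribbon ends one column right of the special column, if that is right of `s`. -/
lemma upper_ht (h : RibbonGrowRel T s T') {Q : ℤ}
    (hQ : ∀ c, s < c → EligibleCol T.upper.ht T.tiles c → c < Q)
    (hQ' : s < Q → EligibleCol T.upper.ht T.tiles (Q - 1) ∧ s < Q - 1) :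
    (∀ x, T'.upper.ht x =
      if s < x ∧ x < Q then spreadHt T.upper s x + 2 else spreadHt T.upper s x) ∧
    T'.tiles = spreadTiles s T.tiles ∪
      (Finset.Ioo s Q).image (fun x => ({(x, spreadHt T.upper s x)} : Finset (ℤ × ℤ))) := by
  obtain ⟨-, R, hR, hmax, hU, htiles⟩ := h
  have hsR : s ≤ R := hmax s (eligibleCol_spread_self _ _ _)
  rcases le_or_gt Q s with hQs | hQs
  · have hRs : R = s := by
      by_contra hne
      have h1 := (eligibleCol_spread_iff T.upper T.tiles (show s ≤ R - 1 by omega)).1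
        (by simpa using hR)
      have := hQ _ h1.1 h1.2
      omega
    subst hRs
    refine ⟨fun x => ?_, ?_⟩
    · rw [hU, if_neg (by omega), if_neg (by omega)]
    · rw [htiles, Finset.Ioo_self, Finset.Ioo_eq_empty (by omega)]
  · obtain ⟨h1, h2⟩ := hQ' hQs
    have h3 : Q ≤ R := by
      have := hmax _ ((eligibleCol_spread_iff T.upper T.tiles h2.le).2 ⟨h2, h1⟩)
      omega
    have h4 := (eligibleCol_spread_iff T.upper T.tiles (show s ≤ R - 1 by omega)).1
        (by simpa using hR)
    have h5 := hQ _ h4.1 h4.2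
    obtain rfl : Q = R := by omega
    exact ⟨hU, htiles⟩

end RibbonGrowRel

lemma area_add_numTiles_of_ribbon {n : ℕ} {T : DyckTiling n} {T' : DyckTiling (n + 1)} {s Q : ℤ}
    (h : T'.tiles = spreadTiles s T.tiles ∪
      (Finset.Ioo s Q).image (fun x => ({(x, spreadHt T.upper s x)} : Finset (ℤ × ℤ)))) :
    T'.area + T'.numTiles = T.area + T.numTiles +
      2 * (((skewCells T.lower T.upper).filter fun c => c.1 = s).card +
        (Finset.Ioo s Q).card) := by
  have hdisj : Disjoint (spreadTiles s T.tiles)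
      ((Finset.Ioo s Q).image
        (fun x => ({(x, spreadHt T.upper s x)} : Finset (ℤ × ℤ)))) := by
    rw [Finset.disjoint_left]
    intro t ht ht'
    obtain ⟨u, hu, rfl⟩ := Finset.mem_image.1 ht
    obtain ⟨x, hx, hxu⟩ := Finset.mem_image.1 ht'
    rw [Finset.mem_Ioo] at hx
    have h1 : (x, spreadHt T.upper s x) ∈ spreadTile s u := by simp [← hxu]
    rw [mem_spreadTile] at h1
    have h2 : (x - 1, spreadHt T.upper s x) ∈ u := by
      rcases h1 with h1 | h1 | h1
      · omega
      · omega
      · exact h1.2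
    have h3 : (x - 1, spreadHt T.upper s x) ∈ skewCells T.lower T.upper := by
      rw [← T.cover]
      exact Finset.mem_biUnion.2 ⟨u, hu, h2⟩
    simp only [skewCells, Finset.mem_filter] at h3
    have h4 : spreadHt T.upper s x = T.upper.ht (x - 1) := by
      simp [spreadHt, show ¬ x < s by omega, show x ≠ s by omega]
    omega
  have hinj : Function.Injective
      (fun x => ({(x, spreadHt T.upper s x)} : Finset (ℤ × ℤ))) := by
    intro a b hab
    simp only [Finset.singleton_inj, Prod.mk.injEq] at hab
    exact hab.1
  rw [T'.area_eq_sum_card, T.area_eq_sum_card, DyckTiling.numTiles, DyckTiling.numTiles, h,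
    Finset.sum_union hdisj, Finset.card_union_of_disjoint hdisj,
    Finset.sum_image hinj.injOn, Finset.card_image_of_injective _ hinj, spreadTiles,
    Finset.sum_image (spreadTile_injective s).injOn,
    Finset.card_image_of_injective _ (spreadTile_injective s),
    ← T.sum_card_filter_tiles]
  simp only [card_spreadTile, Finset.sum_add_distrib, ← Finset.mul_sum, Finset.card_singleton,
    Finset.sum_const, smul_eq_mul, mul_one]
  ring

/-! ### Statistics of prefixes of a word -/

/-- The number of the first `m` letters of `w` that are smaller than `v`. -/
def prefixRank (w : ℕ → ℕ) (m v : ℕ) : ℕ := ((Finset.range m).filter fun j => w j < v).card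

/-- The number of descents among the first `m` letters of `w` straddling the value `v`. -/
def descentsAt (w : ℕ → ℕ) (m v : ℕ) : ℕ :=
  ((Finset.range (m - 1)).filter fun i => w (i + 1) < v ∧ v ≤ w i).card

/-- The `mad` statistic of the standardization of the first `m` letters of `w`. -/
def prefixMad (w : ℕ → ℕ) (m : ℕ) : ℕ :=
  ∑ i ∈ (Finset.range (m - 1)).filter fun i => w (i + 1) < w i,
    (((Finset.range m).filter fun j => w (i + 1) ≤ w j ∧ w j < w i).card +
      ((Finset.range i).filter fun j => w (i + 1) < w j ∧ w j < w i).card)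

section Word

variable {w : ℕ → ℕ}

lemma prefixRank_succ (m v : ℕ) :
    prefixRank w (m + 1) v = prefixRank w m v + if w m < v then 1 else 0 := by
  rw [prefixRank, Finset.range_add_one, Finset.filter_insert]
  split_ifs <;> simp [prefixRank]

lemma prefixRank_le (m v : ℕ) : prefixRank w m v ≤ m := by
  simpa [prefixRank] using Finset.card_filter_le (Finset.range m) fun j => w j < v

lemma prefixRank_mono (m : ℕ) {u v : ℕ} (h : u ≤ v) : prefixRank w m u ≤ prefixRank w m v :=
  Finset.card_le_card fun j hj => by simp at hj ⊢; omega

lemma prefixRank_lt {m i v : ℕ} (hi : i < m) (h : w i < v) :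
    prefixRank w m (w i) < prefixRank w m v := by
  refine Finset.card_lt_card ((Finset.ssubset_iff_of_subset ?_).2 ⟨i, ?_, ?_⟩)
  · intro j hj
    simp at hj ⊢
    omega
  · simp [hi, h]
  · simp

lemma descentsAt_succ (m v : ℕ) :
    descentsAt w (m + 1 + 1) v =
      descentsAt w (m + 1) v + if w (m + 1) < v ∧ v ≤ w m then 1 else 0 := by
  simp only [descentsAt, Nat.add_sub_cancel]
  rw [Finset.range_add_one, Finset.filter_insert]
  split_ifs <;> simp

lemma card_filter_between (m : ℕ) {u v : ℕ} (h : u ≤ v) :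
    ((Finset.range m).filter fun j => u ≤ w j ∧ w j < v).card + prefixRank w m u =
      prefixRank w m v := by
  rw [prefixRank, prefixRank, ← Finset.card_union_of_disjoint]
  · congr 1
    ext j
    simp
    omega
  · rw [Finset.disjoint_filter]
    intros
    omega

lemma prefixMad_succ (hw : Function.Injective w) (m : ℕ) :
    (prefixMad w (m + 1 + 1) : ℤ) = prefixMad w (m + 1) + descentsAt w (m + 1) (w (m + 1)) +
      if w (m + 1) < w m then
        2 * ((prefixRank w (m + 1) (w m) : ℤ) - prefixRank w (m + 1) (w (m + 1))) + 1
      else 0 := by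
  have hold : ∑ i ∈ (Finset.range m).filter (fun i => w (i + 1) < w i),
      (((Finset.range (m + 2)).filter fun j => w (i + 1) ≤ w j ∧ w j < w i).card +
        ((Finset.range i).filter fun j => w (i + 1) < w j ∧ w j < w i).card) =
      prefixMad w (m + 1) + descentsAt w (m + 1) (w (m + 1)) := by
    have hd : descentsAt w (m + 1) (w (m + 1)) =
        ∑ i ∈ (Finset.range m).filter (fun i => w (i + 1) < w i),
          if w (i + 1) ≤ w (m + 1) ∧ w (m + 1) < w i then 1 else 0 := by
      rw [descentsAt, Finset.sum_boole, Finset.filter_filter, Nat.cast_id]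
      congr 1
      ext i
      simp only [Nat.add_sub_cancel, Finset.mem_filter, Finset.mem_range]
      refine and_congr_right fun hi => ?_
      have h1 : w (i + 1) ≠ w (m + 1) := fun h => by have := hw h; omega
      have h2 : w i ≠ w (m + 1) := fun h => by have := hw h; omega
      omega
    rw [hd, prefixMad, Nat.add_sub_cancel, ← Finset.sum_add_distrib]
    refine Finset.sum_congr rfl fun i _ => ?_
    rw [Finset.range_add_one (n := m + 1), Finset.filter_insert]
    split_ifs
    · rw [Finset.card_insert_of_notMem (by simp)]
      omega
    · omega
  have hsplit : prefixMad w (m + 1 + 1) = prefixMad w (m + 1) + descentsAt w (m + 1) (w (m + 1)) +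
      if w (m + 1) < w m then
        ((Finset.range (m + 2)).filter fun j => w (m + 1) ≤ w j ∧ w j < w m).card +
        ((Finset.range m).filter fun j => w (m + 1) < w j ∧ w j < w m).card else 0 := by
    rw [← hold]
    conv_lhs => rw [prefixMad, Nat.add_sub_cancel, Finset.range_add_one (n := m),
      Finset.filter_insert]
    split_ifs
    · rw [Finset.sum_insert (by simp), add_comm]
    · rfl
  rw [hsplit]
  push_cast
  congr 1
  split_ifs with hlt
  · have h1 := card_filter_between (w := w) (m + 2) hlt.le
    have h2 : ((Finset.range m).filter fun j => w (m + 1) < w j ∧ w j < w m).card =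
        ((Finset.range m).filter fun j => w (m + 1) ≤ w j ∧ w j < w m).card := by
      congr 1
      ext j
      simp only [Finset.mem_filter, Finset.mem_range]
      refine and_congr_right fun hj => ?_
      have : w (m + 1) ≠ w j := fun h => by have := hw h; omega
      omega
    have h3 := card_filter_between (w := w) m hlt.le
    rw [prefixRank_succ (m + 1), prefixRank_succ (m + 1)] at h1
    have h4 := prefixRank_succ (w := w) m (w m)
    have h5 := prefixRank_succ (w := w) m (w (m + 1))
    simp only [lt_self_iff_false, if_false, hlt, if_true, hlt.not_gt] at h1 h4 h5
    omega
  · simp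

end Word

/-! ### Growing over the zigzag path -/

/-- The facts carried along the growth of `DTR` over the zigzag path. -/
structure ZigzagGrown (w : ℕ → ℕ) {n : ℕ} (T : DyckTiling n) : Prop where
  lower_ht : ∀ x : ℤ, (x + n) % 2 = 0 → T.lower.ht x = 0
  upper_ht : ∀ v, T.upper.ht (2 * prefixRank w n v - n) = 2 * descentsAt w n v
  area_add : T.area + T.numTiles = 2 * prefixMad w n

lemma IsDTR.zigzagGrown {w : ℕ → ℕ} (hw : Function.Injective w) {n : ℕ} {p : Fin n → ℕ}
    {T : DyckTiling n} (hT : IsDTR n p T)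
    (hp : ∀ i : Fin n, p i = 2 * prefixRank w i (w i)) :
    ZigzagGrown w T ∧
      ∀ m, n = m + 1 → SpecialCol T (2 * prefixRank w m (w m) - m) := by
  induction hT with
  | nil p T =>
    refine ⟨⟨fun x _ => T.lower.ht_order_zero x, fun v => ?_, ?_⟩, by simp⟩
    · rw [T.upper.ht_order_zero]
      simp [descentsAt]
    · have h0 : skewCells T.lower T.upper = ∅ := by
        ext c
        simp only [skewCells, DyckPath.ht_order_zero, Finset.mem_filter, Finset.notMem_empty,
          iff_false]
        omega
      have h1 : T.tiles = ∅ := by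
        by_contra hne
        obtain ⟨t, ht⟩ := Finset.nonempty_iff_ne_empty.2 hne
        obtain ⟨a, b, f, hab, -, -, -, rfl⟩ := T.isDyck t ht
        have : (a, f a) ∈ T.tiles.biUnion id :=
          Finset.mem_biUnion.2 ⟨_, ht, Finset.mem_image.2 ⟨a, by simpa using hab, rfl⟩⟩
        rw [T.cover, h0] at this
        simp at this
      simp [DyckTiling.area, DyckTiling.numTiles, h0, h1, prefixMad]
  | cons n p T T' hT hgrow ih =>
    obtain ⟨ih, hspecial⟩ := ih fun i => by simpa using hp i.castSucc
    have hpn : (p (Fin.last n) : ℤ) = 2 * prefixRank w n (w n) := by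
      exact_mod_cast hp (Fin.last n)
    rw [hpn] at hgrow
    set k := prefixRank w n (w n) with hk
    have hkn : k ≤ n := prefixRank_le _ _
    set s : ℤ := 2 * (k : ℤ) - n with hs
    have hlower : ∀ x : ℤ, (x + (n + 1 : ℕ)) % 2 = 0 → T'.lower.ht x = 0 := by
      intro x hx
      rw [hgrow.1, spreadHt]
      split_ifs
      · exact ih.lower_ht _ (by omega)
      · omega
      · exact ih.lower_ht _ (by omega)
    have hcol : ((skewCells T.lower T.upper).filter fun c => c.1 = s).card =
        descentsAt w n (w n) :=
      card_skewCells_column _ _ (by rw [Finset.mem_Icc]; omega) (by omega)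
        (ih.lower_ht _ (by omega)) (ih.upper_ht _)
    have hx : ∀ v, (2 * (prefixRank w (n + 1) v : ℤ) - ((n + 1 : ℕ) : ℤ)) =
        2 * prefixRank w n v - n + if w n < v then 1 else -1 := by
      intro v
      rw [prefixRank_succ]
      split_ifs <;> push_cast <;> ring
    have hspread : ∀ v, spreadHt T.upper s (2 * prefixRank w (n + 1) v - (n + 1 : ℕ)) =
        2 * descentsAt w n v := by
      intro v
      rw [← ih.upper_ht, hx, spreadHt]
      rcases le_or_gt v (w n) with hv | hv
      · have h1 : prefixRank w n v ≤ k := prefixRank_mono _ hv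
        rw [if_neg hv.not_gt, if_pos (by omega)]
        congr 1
        ring
      · have h1 : k ≤ prefixRank w n v := prefixRank_mono _ hv.le
        rw [if_pos hv, if_neg (by omega), if_neg (by omega)]
        congr 1
        ring
    refine ⟨?_, fun m hm => ?_⟩
    swap
    · obtain rfl : n = m := by omega
      exact hgrow.specialCol
    cases n with
    | zero =>
      have hno : ∀ c, ¬ EligibleCol T.upper.ht T.tiles c := by
        intro c hc
        simpa [DyckPath.ht_order_zero] using hc.1
      obtain ⟨hU, htiles⟩ := hgrow.upper_ht (Q := s) (fun c _ h => absurd h (hno c)) (by simp)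
      refine ⟨hlower, fun v => ?_, ?_⟩
      · rw [hU, if_neg (by omega), hspread]
        simp [descentsAt]
      · have := area_add_numTiles_of_ribbon htiles
        rw [this, ih.area_add, hcol]
        simp [prefixMad, descentsAt]
    | succ m =>
      have hsp := hspecial m rfl
      have hrk : prefixRank w (m + 1) (w m) = prefixRank w m (w m) := by
        simp [prefixRank_succ]
      rw [← hrk] at hsp
      have hne : w (m + 1) ≠ w m := fun h => by have := hw h; omega
      by_cases hdes : w (m + 1) < w m
      · have hlt : k ≤ prefixRank w (m + 1) (w m) := prefixRank_mono _ hdes.le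
        obtain ⟨hU, htiles⟩ := hgrow.upper_ht
          (Q := 2 * prefixRank w (m + 1) (w m) - m + 1) (fun c _ h => by
            have := hsp.2 c h; omega)
          (fun _ => ⟨by simpa using hsp.1, by omega⟩)
        refine ⟨hlower, fun v => ?_, ?_⟩
        · rw [hU, hspread, descentsAt_succ, hx]
          rcases le_or_gt v (w (m + 1)) with hv | hv
          · have h1 : prefixRank w (m + 1) v ≤ k := prefixRank_mono _ hv
            rw [if_neg hv.not_gt, if_neg (by omega), if_neg (by omega), add_zero]
          · have h1 : k ≤ prefixRank w (m + 1) v := prefixRank_mono _ hv.le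
            rw [if_pos hv]
            rcases le_or_gt v (w m) with hv' | hv'
            · have h3 : prefixRank w (m + 1) v ≤ prefixRank w (m + 1) (w m) :=
                prefixRank_mono _ hv'
              rw [if_pos (by omega), if_pos ⟨hv, hv'⟩]
              push_cast
              ring
            · have h3 : prefixRank w (m + 1) (w m) < prefixRank w (m + 1) v :=
                prefixRank_lt (by omega) hv'
              rw [if_neg (by omega), if_neg (by omega), add_zero]
        · have h1 := area_add_numTiles_of_ribbon htiles
          have h2 := prefixMad_succ hw m
          rw [if_pos hdes] at h2
          rw [ih.area_add, hcol, Int.card_Ioo] at h1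
          omega
      · have hlt : prefixRank w (m + 1) (w m) < k := prefixRank_lt (by omega) (by omega)
        obtain ⟨hU, htiles⟩ := hgrow.upper_ht (Q := s) (fun c _ h => by
            have := hsp.2 c h; omega) (by simp)
        refine ⟨hlower, fun v => ?_, ?_⟩
        · rw [hU, if_neg (by omega), hspread, descentsAt_succ, if_neg (by omega), add_zero]
        · have h1 := area_add_numTiles_of_ribbon htiles
          have h2 := prefixMad_succ hw m
          rw [if_neg hdes] at h2
          rw [ih.area_add, hcol, Finset.Ioo_self, Finset.card_empty] at h1
          omega

/-! ### Labelings of the zigzag path -/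

lemma DyckPath.pt_succ {n : ℕ} (P : DyckPath n) {k : ℕ} (hk : k < 2 * n) :
    P.pt (k + 1) = P.pt k + if P.step ⟨k, hk⟩ = true then 1 else -1 := by
  have key : ∀ b, (Finset.univ.filter fun i : Fin (2 * n) =>
      ((i : ℕ) : ℤ) < ((k + 1 : ℕ) : ℤ) - n + n ∧ P.step i = b).card =
      (Finset.univ.filter fun i : Fin (2 * n) =>
        ((i : ℕ) : ℤ) < (k : ℤ) - n + n ∧ P.step i = b).card +
      if P.step ⟨k, hk⟩ = b then 1 else 0 := by
    intro b
    have h : (Finset.univ.filter fun i : Fin (2 * n) =>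
        ((i : ℕ) : ℤ) < ((k + 1 : ℕ) : ℤ) - n + n ∧ P.step i = b) =
        (Finset.univ.filter fun i : Fin (2 * n) =>
          ((i : ℕ) : ℤ) < (k : ℤ) - n + n ∧ P.step i = b) ∪
        if P.step ⟨k, hk⟩ = b then {⟨k, hk⟩} else ∅ := by
      ext i
      rcases eq_or_ne i ⟨k, hk⟩ with rfl | hi
      · split_ifs with hb <;> simp [hb]
      · have : (i : ℕ) ≠ k := fun h => hi (Fin.ext h)
        have h' : i ∉ (if P.step ⟨k, hk⟩ = b then {⟨k, hk⟩} else ∅ : Finset (Fin (2 * n))) := by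
          split_ifs <;> simp [hi]
        simp only [Finset.mem_filter, Finset.mem_univ, true_and, Finset.mem_union, h', or_false]
        refine and_congr_left fun _ => ?_
        omega
    rw [h, Finset.card_union_of_disjoint]
    · split_ifs <;> simp
    · split_ifs <;> simp
  rw [DyckPath.pt, DyckPath.pt, DyckPath.ht, DyckPath.ht, key, key]
  cases P.step ⟨k, hk⟩ <;> simp <;> ring

lemma zigzag_pt_even {n : ℕ} {Z : DyckPath n}
    (hZ : ∀ i : Fin (2 * n), Z.step i = decide ((i : ℕ) % 2 = 0)) {a : ℕ} (ha : a ≤ n) :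
    Z.pt (2 * a) = 0 := by
  induction a with
  | zero =>
    have h : ∀ x : ℕ, ¬ (x : ℤ) < 0 := fun x => by omega
    simp [DyckPath.pt, DyckPath.ht, h]
  | succ a ih =>
    rw [show 2 * (a + 1) = 2 * a + 1 + 1 by ring, Z.pt_succ (by omega), Z.pt_succ (by omega),
      ih (by omega), hZ, hZ, if_pos (by simp), if_neg (by simp)]
    simp

/-- Chords of the zigzag path are not nested, so comparing a right endpoint with a left
endpoint amounts to comparing left endpoints. -/
lemma zigzag_r_lt_l_iff {n : ℕ} {Z : DyckPath n}
    (hZ : ∀ i : Fin (2 * n), Z.step i = decide ((i : ℕ) % 2 = 0)) (C : ChordLabeling Z)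
    (i j : Fin n) : C.r j < C.l i ↔ C.l j < C.l i := by
  obtain ⟨hlr, -, ⟨hlj, hstepj⟩, -, -, habove⟩ := C.chord j
  obtain ⟨-, -, ⟨hli, hstepi⟩, -⟩ := C.chord i
  refine ⟨fun h => hlr.trans h, fun h => ?_⟩
  by_contra! hle
  have h1 := habove _ h hle
  rw [hZ, decide_eq_true_eq] at hstepi hstepj
  simp only at hstepi hstepj
  obtain ⟨a, ha⟩ := Nat.dvd_of_mod_eq_zero hstepi
  obtain ⟨b, hb⟩ := Nat.dvd_of_mod_eq_zero hstepj
  rw [ha, hb, zigzag_pt_even hZ (by omega), zigzag_pt_even hZ (by omega)] at h1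
  omega

/-- The word of a permutation, extended to all of `ℕ` by the identity. -/
def extendedWord {n : ℕ} (σ : Equiv.Perm (Fin n)) (i : ℕ) : ℕ :=
  if h : i < n then (σ ⟨i, h⟩ : ℕ) else i

section ExtendedWord

variable {n : ℕ} (σ : Equiv.Perm (Fin n))

lemma extendedWord_coe (i : Fin n) : extendedWord σ i = permWord σ i := by
  simp [extendedWord, permWord]

lemma extendedWord_injective : Function.Injective (extendedWord σ) := by
  intro a b h
  unfold extendedWord at h
  split_ifs at h with ha hb hb
  · simpa using σ.injective (Fin.ext h)
  · have := (σ ⟨a, ha⟩).isLt; omega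
  · have := (σ ⟨b, hb⟩).isLt; omega
  · exact h

lemma card_filter_range_eq {m : ℕ} (hm : m ≤ n) (p : ℕ → Prop) [DecidablePred p] :
    ((Finset.range m).filter fun j => p (extendedWord σ j)).card =
      (Finset.univ.filter fun j : Fin n => (j : ℕ) < m ∧ p (permWord σ j)).card := by
  rw [← Finset.card_map Fin.valEmbedding]
  congr 1
  ext j
  simp only [Finset.mem_filter, Finset.mem_range, Finset.mem_map, Finset.mem_univ, true_and,
    Fin.valEmbedding_apply]
  constructor
  · rintro ⟨h1, h2⟩
    exact ⟨⟨j, by omega⟩, ⟨h1, by rwa [← extendedWord_coe]⟩, rfl⟩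
  · rintro ⟨j, ⟨h1, h2⟩, rfl⟩
    exact ⟨h1, by rwa [extendedWord_coe]⟩

lemma extendedWord_succ {i : Fin n} (hi : (i : ℕ) + 1 < n) :
    extendedWord σ (i + 1) = permWord σ (nextIdx i) := by
  rw [← extendedWord_coe, nextIdx]
  simp only [Nat.mod_eq_of_lt hi]

lemma card_filter_permWord_between {u v : ℕ} (hv : v ≤ n) :
    (Finset.univ.filter fun j : Fin n => u ≤ permWord σ j ∧ permWord σ j < v).card = v - u := by
  rw [← Nat.card_Ico, ← Finset.card_map (σ.toEmbedding.trans Fin.valEmbedding)]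
  congr 1
  ext a
  simp only [Finset.mem_map, permWord, Function.Embedding.trans_apply, Equiv.coe_toEmbedding,
    Fin.valEmbedding_apply, Finset.mem_Ico]
  constructor
  · rintro ⟨j, h, rfl⟩
    exact (Finset.mem_filter.1 h).2
  · intro h
    refine ⟨σ.symm ⟨a, by omega⟩, Finset.mem_filter.2 ⟨Finset.mem_univ _, ?_⟩, by simp⟩
    simpa using h

lemma prefixMad_extendedWord : prefixMad (extendedWord σ) n = mad σ := by
  rw [mad, desdif, resStat, ← Finset.sum_add_distrib, prefixMad]
  symm
  refine Finset.sum_bij (fun i _ => (i : ℕ)) ?_ (fun i _ j _ h => Fin.ext h) ?_ ?_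
  · intro i hi
    simp only [descentFinset, Finset.mem_filter, Finset.mem_univ, true_and] at hi
    simp only [Finset.mem_filter, Finset.mem_range]
    rw [extendedWord_succ σ hi.1, extendedWord_coe]
    exact ⟨by omega, hi.2⟩
  · intro i hi
    simp only [Finset.mem_filter, Finset.mem_range] at hi
    refine ⟨⟨i, by omega⟩, ?_, rfl⟩
    simp only [descentFinset, Finset.mem_filter, Finset.mem_univ, true_and]
    refine ⟨by omega, ?_⟩
    rw [← extendedWord_succ σ (by simp only; omega), ← extendedWord_coe]
    exact hi.2
  · intro i hi
    simp only [descentFinset, Finset.mem_filter, Finset.mem_univ, true_and] at hi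
    rw [extendedWord_succ σ hi.1, extendedWord_coe,
      card_filter_range_eq σ le_rfl fun a => permWord σ (nextIdx i) ≤ a ∧ a < permWord σ i,
      card_filter_range_eq σ i.isLt.le fun a => permWord σ (nextIdx i) < a ∧ a < permWord σ i]
    simp only [Fin.is_lt, true_and]
    rw [card_filter_permWord_between σ (v := permWord σ i) (σ i).isLt.le]
    rfl

end ExtendedWord

lemma seqOf_zigzag {n : ℕ} {Z : DyckPath n}
    (hZ : ∀ i : Fin (2 * n), Z.step i = decide ((i : ℕ) % 2 = 0)) (C : ChordLabeling Z)
    {σ : Equiv.Perm (Fin n)} (hσ : IsStandardization C.l σ) (i : Fin n) :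
    seqOf C i = 2 * prefixRank (extendedWord σ) i (extendedWord σ i) := by
  rw [seqOf, prefixRank, extendedWord_coe,
    card_filter_range_eq σ i.isLt.le fun a => a < permWord σ i, two_mul]
  simp only [zigzag_r_lt_l_iff hZ, ← hσ _ i]
  rfl

/-- For every permutation `σ` of `{1, …, n}`,
`art(DTR(zigzag_n, σ)) = mad(σ)`. -/
theorem art_DTR_zigzag_eq_mad (n : ℕ) (Z : DyckPath n)
    (hZ : ∀ i : Fin (2 * n), Z.step i = decide ((i : ℕ) % 2 = 0))
    (σ : Equiv.Perm (Fin n)) (T : DyckTiling n) (hT : IsDTRof Z σ T) :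
    T.art = mad σ := by
  obtain ⟨C, hσ, hdtr⟩ := hT
  have h := (hdtr.zigzagGrown (extendedWord_injective σ) (seqOf_zigzag hZ C hσ)).1.area_add
  rw [DyckTiling.art, h, prefixMad_extendedWord]
  omega

end
end

section
/- Let λ be a Dyck path of order n and L a natural labeling of its chord poset P_λ, and let ℓ_i and r_i denote the positions of the left and right endpoints of the chord labeled i. Then the inversion set of the word ℓ = ℓ_1⋯ℓ_n is contained in the inversion set of the word r = r_1⋯r_n: INV(ℓ) ⊆ INV(r). In particular, if σ and τ are the standardizations of ℓ and r respectively, then INV(σ) ⊆ INV(τ). -/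
open Finset

noncomputable section

/-- For any natural labeling of the chord poset of a Dyck path,
`INV(ℓ) ⊆ INV(r)`; in particular the standardizations `σ` of `ℓ` and `τ` of `r`
satisfy `INV(σ) ⊆ INV(τ)`. -/
theorem inversions_left_subset_right (n : ℕ) (lam : DyckPath n)
    (C : ChordLabeling lam) :
    (∀ i j : Fin n, i < j → C.l j < C.l i → C.r j < C.r i) ∧
    (∀ σ τ : Equiv.Perm (Fin n), IsStandardization C.l σ → IsStandardization C.r τ →
      ∀ i j : Fin n, i < j → σ j < σ i → τ j < τ i) := by
  have key : ∀ i j : Fin n, i < j → C.l j < C.l i → C.r j < C.r i := by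
    intro i j hij hl
    by_contra! hr
    obtain ⟨hi, -, -, -, hpi, -⟩ := C.chord i
    obtain ⟨-, -, -, -, hpj, hj⟩ := C.chord j
    rcases hr.lt_or_eq with hr | hr
    · exact absurd (C.natural i j hl hr) hij.not_gt
    · have := hj (C.l i) hl (hr ▸ hi.le)
      rw [← hpi, ← hpj, hr] at this
      exact this.false
  refine ⟨key, fun σ τ hσ hτ i j hij h => ?_⟩
  exact (hτ j i).2 (key i j hij ((hσ j i).1 h))

end
end
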